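/- Let x = Σ_{w∈F} f_w T_w^{(1)} ∈ C_c(W, ℓ^∞(W)) with F ⊆ W finite and f_w ∈ ℓ^∞(W), and let 0 < κ ≤ 1. Then the Schur multiplier m_κ(x) exists, equals Σ_{w∈F} κ^{ℓ(w)} f_w T_w^{(1)} ∈ C_c(W, ℓ^∞(W)), its commutator [D_S, m_κ(x)] exists and equals m_κ([D_S, x]), and ‖[D_S, m_κ(x)]‖ ≤ ‖[D_S, x]‖. -/

import Mathlib

/-!
The commutator `C = [D_S, x]` is supported on the finitely many diagonals `u v⁻¹ ∈ F`, so `m_κ(C)`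
is a finite sum of weighted translations and hence bounded; its defining matrix coefficients are
those of `[D_S, m_κ(x)]`. The content of the theorem is that Schur multiplication by
`κ ^ ℓ(u v⁻¹)` is contractive.

Every `w` has a finite set `N w` of right inversions, and `ℓ(u v⁻¹)` is the cardinality of the
symmetric difference of `N u` and `N v` (`exists_inversion_sets`). This rests on the permutation
representation of `W` on `W × ZMod 2` in which a simple reflection `s` maps `(t, ε)` to
`(s t s, ε + [t = s])`: a word `ω` acts by conjugation on the first coordinate, and adds to the
second one the number of occurrences of `t` in the right inversion sequence of `ω`.

Consequently the kernel `κ ^ ℓ(u v⁻¹)` is a product over reflections `r` of kernels taking the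
value `1` if `u` and `v` lie on the same side of `r`, and `κ` otherwise. The Schur multiplier of one
such factor is the convex combination `y ↦ (1 + κ)/2 • y + (1 - κ)/2 • D y D` with `D` a diagonal
operator with entries `±1`, hence contractive (`exists_schur_sign`). On a finitely supported vector
only finitely many reflections matter (`exists_schur_finset`), and such vectors are dense.
-/

noncomputable section

open scoped InnerProductSpace ComplexOrder

/-- The Hilbert space ℓ²(W) of square-summable complex functions on `W`. -/
abbrev l2 (W : Type*) := lp (fun _ : W => ℂ) 2

/-- The canonical orthonormal basis vector δ_w of ℓ²(W). -/
def delta {W : Type*} [DecidableEq W] (w : W) : l2 W := lp.single 2 w (1 : ℂ)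

/-- Bounded operators on ℓ²(W). -/
abbrev Op (W : Type*) := l2 W →L[ℂ] l2 W

/-- `C` is the commutator `[D_S, x]` of `x` with the Dirac operator `D_S = Σ_n n P_n`:
the bounded operator with matrix coefficients ⟨Cδ_v, δ_u⟩ = (ℓ(u) − ℓ(v))⟨xδ_v, δ_u⟩. -/
def IsCommutatorDS {B W : Type*} [Group W] [DecidableEq W] {M : CoxeterMatrix B}
    (cs : CoxeterSystem M W) (x C : Op W) : Prop :=
  ∀ v u : W, ⟪C (delta v), delta u⟫_ℂ =
    ((cs.length u : ℂ) - (cs.length v : ℂ)) * ⟪x (delta v), delta u⟫_ℂ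

/-- `My` is the Schur multiplier m_κ(y): the bounded operator with matrix coefficients
⟨m_κ(y)δ_v, δ_u⟩ = κ^{ℓ(uv⁻¹)} ⟨yδ_v, δ_u⟩. -/
def IsSchur {B W : Type*} [Group W] [DecidableEq W] {M : CoxeterMatrix B}
    (cs : CoxeterSystem M W) (κ : ℝ) (y My : Op W) : Prop :=
  ∀ u v : W, ⟪My (delta v), delta u⟫_ℂ =
    (κ : ℂ) ^ (cs.length (u * v⁻¹)) * ⟪y (delta v), delta u⟫_ℂ

/-! ### Inversion sets and word length -/

/-- The action of the simple reflection `s = cs.simple i` on `W × ZMod 2`, sending `(t, ε)` to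
`(s t s, ε + [t = s])`. All of `W` is used in place of the set of reflections. -/
def reflPerm {B W : Type*} [Group W] [DecidableEq W] {M : CoxeterMatrix B}
    (cs : CoxeterSystem M W) (i : B) : Equiv.Perm (W × ZMod 2) :=
  Function.Involutive.toPerm
    (fun p => (cs.simple i * p.1 * cs.simple i, p.2 + if p.1 = cs.simple i then 1 else 0)) (by
      rintro ⟨t, ε⟩
      have h1 : cs.simple i * (cs.simple i * t * cs.simple i) * cs.simple i = t := by
        simp [mul_assoc]
      have h2 : cs.simple i * t * cs.simple i = cs.simple i ↔ t = cs.simple i := by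
        constructor
        · intro h
          rw [h] at h1
          rw [← h1]; simp
        · rintro rfl; simp
      ext1
      · exact h1
      · simp only [h2]
        rw [add_assoc, CharTwo.add_self_eq_zero, add_zero])

theorem reflPerm_apply {B W : Type*} [Group W] [DecidableEq W] {M : CoxeterMatrix B}
    (cs : CoxeterSystem M W) (i : B) (t : W) (ε : ZMod 2) :
    reflPerm cs i (t, ε) =
      (cs.simple i * t * cs.simple i, ε + if t = cs.simple i then 1 else 0) := rfl

/-- In the dihedral subgroup generated by `s = cs.simple i` and `s' = cs.simple j`, the
reflections met by the word `(s s')^k` are `s' (s s')^l` for `l < 2k`. -/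
theorem reflPerm_mul_pow {B W : Type*} [Group W] [DecidableEq W] {M : CoxeterMatrix B}
    (cs : CoxeterSystem M W) (i j : B) (k : ℕ) (t : W) (ε : ZMod 2) :
    ((reflPerm cs i * reflPerm cs j) ^ k) (t, ε) =
      ((cs.simple i * cs.simple j) ^ k * t * ((cs.simple i * cs.simple j) ^ k)⁻¹,
        ε + ∑ l ∈ Finset.range (2 * k),
          if t = cs.simple j * (cs.simple i * cs.simple j) ^ l then 1 else 0) := by
  induction k with
  | zero => simp
  | succ k ih =>
    rw [pow_succ', Equiv.Perm.mul_apply, ih, Equiv.Perm.mul_apply, reflPerm_apply, reflPerm_apply]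
    set s := cs.simple i
    set s' := cs.simple j
    have hs : s⁻¹ = s := cs.inv_simple i
    have hs' : s'⁻¹ = s' := cs.inv_simple j
    have hss' : s' * s' = 1 := cs.simple_mul_simple_self j
    -- `s'` inverts the rotation `s s'`.
    have hc : ∀ n : ℕ, s' * (s * s') ^ n = ((s * s') ^ n)⁻¹ * s' := by
      intro n
      have h : SemiconjBy s' (s * s') (s * s')⁻¹ := by
        simp [SemiconjBy, hs, hs', mul_assoc]
      simpa only [inv_pow] using (h.pow_right n).eq
    have e1 : (s * s') ^ k * t * ((s * s') ^ k)⁻¹ = s' ↔ t = s' * (s * s') ^ (2 * k) := by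
      rw [two_mul, pow_add, ← mul_assoc, hc, mul_inv_eq_iff_eq_mul, mul_assoc,
        eq_inv_mul_iff_mul_eq]
    have e2 : s' * ((s * s') ^ k * t * ((s * s') ^ k)⁻¹) * s' = s ↔
        t = s' * (s * s') ^ (2 * k + 1) := by
      have h3 : ∀ x : W, s' * x * s' = s ↔ x = s' * s * s' := by
        intro x
        constructor
        · intro h
          rw [← h]
          simp only [mul_assoc, hss', mul_one]
          simp only [← mul_assoc, hss', one_mul]
        · rintro rfl
          simp only [mul_assoc, hss', mul_one]
          simp only [← mul_assoc, hss', one_mul]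
      rw [h3, show 2 * k + 1 = k + (1 + k) by ring, pow_add, ← mul_assoc, hc,
        mul_inv_eq_iff_eq_mul, mul_assoc _⁻¹, eq_inv_mul_iff_mul_eq, pow_add, pow_one]
      simp only [mul_assoc]
    rw [show 2 * (k + 1) = 2 * k + 1 + 1 by ring, Finset.sum_range_succ, Finset.sum_range_succ]
    simp only [e1, e2]
    ext1
    · simp only [pow_succ', mul_inv_rev, hs, hs', mul_assoc]
    · simp only [add_assoc]

theorem reflPerm_isLiftable {B W : Type*} [Group W] [DecidableEq W] {M : CoxeterMatrix B}
    (cs : CoxeterSystem M W) : M.IsLiftable (reflPerm cs) := by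
  intro i j
  ext1 ⟨t, ε⟩
  have hm : (cs.simple i * cs.simple j) ^ M i j = 1 := cs.simple_mul_simple_pow i j
  rw [reflPerm_mul_pow, hm, two_mul, Finset.sum_range_add]
  -- The summands are periodic in `l` with period `M i j`, so the sum is even.
  simp only [pow_add, hm, one_mul, CharTwo.add_self_eq_zero]
  simp

theorem lift_reflPerm_wordProd {B W : Type*} [Group W] [DecidableEq W] {M : CoxeterMatrix B}
    (cs : CoxeterSystem M W) (ω : List B) (t : W) (ε : ZMod 2) :
    cs.lift ⟨reflPerm cs, reflPerm_isLiftable cs⟩ (cs.wordProd ω) (t, ε) =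
      (cs.wordProd ω * t * (cs.wordProd ω)⁻¹, ε + ((cs.rightInvSeq ω).count t : ZMod 2)) := by
  induction ω with
  | nil => simp
  | cons i ω ih =>
    have e : cs.wordProd ω * t * (cs.wordProd ω)⁻¹ = cs.simple i ↔
        (cs.wordProd ω)⁻¹ * cs.simple i * cs.wordProd ω = t := by
      constructor
      · intro h; rw [← h]; group
      · intro h; rw [← h]; group
    rw [cs.wordProd_cons, map_mul, Equiv.Perm.mul_apply, ih, cs.lift_apply_simple, reflPerm_apply,
      CoxeterSystem.rightInvSeq, List.count_cons]
    simp only [e, beq_iff_eq]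
    ext1
    · simp [mul_assoc]
    · push_cast; simp only [add_assoc]

/-- `N w` is the set of right inversions of `w`; the identity counts the reflections separating
`u` from `v`. -/
theorem exists_inversion_sets {B W : Type*} [Group W] [DecidableEq W] {M : CoxeterMatrix B}
    (cs : CoxeterSystem M W) :
    ∃ N : W → Finset W, ∀ u v : W,
      (symmDiff (N u) (N v)).card = cs.length (u * v⁻¹) := by
  choose ω hω hωw using cs.exists_isReduced
  set Φ := cs.lift ⟨reflPerm cs, reflPerm_isLiftable cs⟩ with hΦ
  have hΦw : ∀ w t ε, Φ w (t, ε) = (w * t * w⁻¹, ε + ((cs.rightInvSeq (ω w)).count t : ZMod 2)) := by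
    intro w t ε
    have := lift_reflPerm_wordProd cs (ω w) t ε
    rwa [← hωw w] at this
  refine ⟨fun w => (cs.rightInvSeq (ω w)).toFinset, fun u v => ?_⟩
  have hcount : ∀ w t, ((cs.rightInvSeq (ω w)).count t : ZMod 2) =
      if t ∈ (cs.rightInvSeq (ω w)).toFinset then 1 else 0 := by
    intro w t
    rw [(hω w).nodup_rightInvSeq.count]
    simp
  -- The cocycle identity `N (g v) = N v ∆ v⁻¹ (N g) v`, for `g = u v⁻¹`.
  have hco : ∀ t, (if t ∈ (cs.rightInvSeq (ω u)).toFinset then (1 : ZMod 2) else 0) =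
      (if t ∈ (cs.rightInvSeq (ω v)).toFinset then 1 else 0) +
      if v * t * v⁻¹ ∈ (cs.rightInvSeq (ω (u * v⁻¹))).toFinset then 1 else 0 := by
    intro t
    have h := congrArg (fun g => (g (t, 0)).2) (map_mul Φ (u * v⁻¹) v)
    simp only [inv_mul_cancel_right, Equiv.Perm.mul_apply, hΦw, zero_add, hcount] at h
    exact h
  have hset : symmDiff (cs.rightInvSeq (ω u)).toFinset (cs.rightInvSeq (ω v)).toFinset =
      (cs.rightInvSeq (ω (u * v⁻¹))).toFinset.map
        (MulAut.conj v⁻¹).toEquiv.toEmbedding := by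
    ext t
    have h := hco t
    have hmem : t ∈ (cs.rightInvSeq (ω (u * v⁻¹))).toFinset.map
        (MulAut.conj v⁻¹).toEquiv.toEmbedding ↔
        v * t * v⁻¹ ∈ (cs.rightInvSeq (ω (u * v⁻¹))).toFinset := by
      rw [Finset.mem_map_equiv]
      simp [← MulEquiv.toEquiv_symm]
    rw [hmem, Finset.mem_symmDiff]
    by_cases h1 : t ∈ (cs.rightInvSeq (ω u)).toFinset <;>
    by_cases h2 : t ∈ (cs.rightInvSeq (ω v)).toFinset <;>
    by_cases h3 : v * t * v⁻¹ ∈ (cs.rightInvSeq (ω (u * v⁻¹))).toFinset <;>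
    simp only [h1, h2, h3, if_true, if_false] at h ⊢ <;> revert h <;> decide
  rw [hset, Finset.card_map, List.toFinset_card_of_nodup (hω _).nodup_rightInvSeq,
    cs.length_rightInvSeq, ← (hω _).eq, ← hωw]

/-! ### Contractive Schur multipliers -/

theorem exists_diagonal {W : Type*} (d : W → ℂ) (K : ℝ) (hK : 0 ≤ K)
    (hd : ∀ w, ‖d w‖ ≤ K) :
    ∃ D : Op W, (∀ (a : l2 W) (w : W), D a w = d w * a w) ∧ ‖D‖ ≤ K := by
  have hb : ∀ (a : l2 W) (w : W), ‖d w * a w‖ ≤ ‖((K : ℂ) • a) w‖ := by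
    intro a w
    rw [lp.coeFn_smul, Pi.smul_apply, norm_mul, norm_smul, Complex.norm_real,
      Real.norm_of_nonneg hK]
    exact mul_le_mul_of_nonneg_right (hd w) (norm_nonneg _)
  let L : l2 W →ₗ[ℂ] l2 W :=
    { toFun := fun a => ⟨fun w => d w * a w, (lp.memℓp ((K : ℂ) • a)).mono' (hb a)⟩
      map_add' := fun a b => by ext w; exact mul_add (d w) (a w) (b w)
      map_smul' := fun c a => by ext w; simp [mul_left_comm] }
  have hL : ∀ a, ‖L a‖ ≤ K * ‖a‖ := by
    intro a
    have h := lp.norm_mono (p := 2) (by norm_num) (x := L a) (y := (K : ℂ) • a) (hb a)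
    rwa [norm_smul, Complex.norm_real, Real.norm_of_nonneg hK] at h
  exact ⟨L.mkContinuous K hL, fun a w => rfl, L.mkContinuous_norm_le hK hL⟩

theorem delta_apply {W : Type*} [DecidableEq W] (v u : W) :
    (delta v : l2 W) u = if u = v then 1 else 0 := by
  rw [delta, lp.single_apply, Pi.single_apply]

theorem inner_delta {W : Type*} [DecidableEq W] (a : l2 W) (u : W) :
    ⟪a, delta u⟫_ℂ = (starRingEnd ℂ) (a u) := by
  rw [delta, lp.inner_single_right]
  simp

/-- Schur multiplication by the kernel that is `1` on pairs inside `A` or inside its complement,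
and `κ` elsewhere. -/
theorem exists_schur_sign {W : Type*} [DecidableEq W] (A : W → Prop) [DecidablePred A] (κ : ℝ)
    (hκ0 : 0 < κ) (hκ1 : κ ≤ 1) (y : Op W) :
    ∃ z : Op W, ‖z‖ ≤ ‖y‖ ∧ ∀ u v : W,
      z (delta v) u = (if (A u ↔ A v) then 1 else (κ : ℂ)) * y (delta v) u := by
  obtain ⟨D, hD, hDn⟩ := exists_diagonal (fun w : W => if A w then (1 : ℂ) else -1) 1 zero_le_one
    (fun w => by split_ifs <;> simp)
  have hDd : ∀ v : W, D (delta v) = (if A v then (1 : ℂ) else -1) • delta v := by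
    intro v
    ext w
    rw [hD, lp.coeFn_smul, Pi.smul_apply, delta_apply, smul_eq_mul]
    by_cases h : w = v
    · rw [h]
    · simp [h]
  refine ⟨(((1 + κ) / 2 : ℝ) : ℂ) • y + (((1 - κ) / 2 : ℝ) : ℂ) • (D * y * D), ?_, ?_⟩
  · have h1 : ‖D * y * D‖ ≤ ‖y‖ := by
      calc ‖D * y * D‖ ≤ ‖D‖ * ‖y‖ * ‖D‖ :=
            (norm_mul_le _ _).trans (by gcongr; exact norm_mul_le _ _)
        _ ≤ 1 * ‖y‖ * 1 := by gcongr
        _ = ‖y‖ := by ring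
    refine (norm_add_le _ _).trans ?_
    rw [norm_smul, norm_smul, Complex.norm_real, Complex.norm_real,
      Real.norm_of_nonneg (by linarith), Real.norm_of_nonneg (by linarith)]
    nlinarith [norm_nonneg y]
  · intro u v
    have h2 : (D * y * D) (delta v) u =
        (if A u then (1 : ℂ) else -1) * ((if A v then (1 : ℂ) else -1) * y (delta v) u) := by
      change D (y (D (delta v))) u = _
      rw [hD, hDd, map_smul, lp.coeFn_smul, Pi.smul_apply, smul_eq_mul]
    rw [add_apply, smul_apply,
      smul_apply, lp.coeFn_add, Pi.add_apply, lp.coeFn_smul, lp.coeFn_smul,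
      Pi.smul_apply, Pi.smul_apply, h2, smul_eq_mul, smul_eq_mul]
    by_cases hu : A u <;> by_cases hv : A v <;> simp [hu, hv] <;> ring

theorem exists_schur_finset {W : Type*} [DecidableEq W] (N : W → Finset W) (κ : ℝ)
    (hκ0 : 0 < κ) (hκ1 : κ ≤ 1) (y : Op W) (R : Finset W) :
    ∃ z : Op W, ‖z‖ ≤ ‖y‖ ∧ ∀ u v : W,
      z (delta v) u = (κ : ℂ) ^ (R ∩ symmDiff (N u) (N v)).card * y (delta v) u := by
  induction R using Finset.induction_on with
  | empty => exact ⟨y, le_rfl, by simp⟩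
  | insert r R hr ih =>
    obtain ⟨z, hz, hze⟩ := ih
    obtain ⟨z', hz', hze'⟩ := exists_schur_sign (fun w => r ∈ N w) κ hκ0 hκ1 z
    refine ⟨z', hz'.trans hz, fun u v => ?_⟩
    rw [hze', hze]
    by_cases h : r ∈ N u ↔ r ∈ N v
    · have hm : r ∉ symmDiff (N u) (N v) := by rw [Finset.mem_symmDiff]; tauto
      rw [Finset.insert_inter_of_notMem hm, if_pos h, one_mul]
    · have hm : r ∈ symmDiff (N u) (N v) := by rw [Finset.mem_symmDiff]; tauto
      rw [Finset.insert_inter_of_mem hm, if_neg h,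
        Finset.card_insert_of_notMem (fun h' => hr (Finset.mem_inter.1 h').1), pow_succ']
      ring

/-- If `z` is the Schur multiple of `y` by the kernel `κ ^ |N u ∆ N v|` and `y` has finitely
supported columns, then `z` is bounded by `y`: on a finitely supported vector, `z` agrees with
one of the operators of `exists_schur_finset`. -/
theorem norm_schur_le {W : Type*} [DecidableEq W] (N : W → Finset W) (κ : ℝ)
    (hκ0 : 0 < κ) (hκ1 : κ ≤ 1) (y z : Op W) (Q : W → Finset W)
    (hQ : ∀ u v : W, u ∉ Q v → y (delta v) u = 0)
    (hz : ∀ u v : W, z (delta v) u = (κ : ℂ) ^ (symmDiff (N u) (N v)).card * y (delta v) u) :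
    ‖z‖ ≤ ‖y‖ := by
  have hfin : ∀ (a : l2 W) (s : Finset W),
      ‖z (∑ v ∈ s, lp.single 2 v (a v))‖ ≤ ‖y‖ * ‖∑ v ∈ s, lp.single 2 v (a v)‖ := by
    intro a s
    obtain ⟨z', hz', hze'⟩ := exists_schur_finset N κ hκ0 hκ1 y
      (s.biUnion fun v => (Q v).biUnion fun u => symmDiff (N u) (N v))
    have hcol : ∀ v ∈ s, z (delta v) = z' (delta v) := by
      intro v hv
      ext u
      rw [hz, hze']
      by_cases hu : u ∈ Q v
      · rw [Finset.inter_eq_right.2]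
        exact fun r hr => Finset.mem_biUnion.2 ⟨v, hv, Finset.mem_biUnion.2 ⟨u, hu, hr⟩⟩
      · rw [hQ u v hu, mul_zero, mul_zero]
    have hsingle : ∀ v, (lp.single 2 v (a v) : l2 W) = a v • delta v := by
      intro v
      rw [delta, ← lp.single_smul, smul_eq_mul, mul_one]
    have heq : z (∑ v ∈ s, lp.single 2 v (a v)) = z' (∑ v ∈ s, lp.single 2 v (a v)) := by
      simp only [map_sum, hsingle, map_smul]
      exact Finset.sum_congr rfl fun v hv => by rw [hcol v hv]
    rw [heq]
    exact (z'.le_opNorm _).trans (by gcongr)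
  refine z.opNorm_le_bound (norm_nonneg _) fun a => ?_
  have ha : Filter.Tendsto (fun s : Finset W => ∑ v ∈ s, (lp.single 2 v (a v) : l2 W))
      Filter.atTop (nhds a) := lp.hasSum_single (by norm_num) a
  exact le_of_tendsto_of_tendsto' ((z.continuous.tendsto a).comp ha).norm
    (ha.norm.const_mul ‖y‖) (hfin a)

/-- For x = Σ_{w∈F} f_w T_w^{(1)} ∈ C_c(W, ℓ∞(W)) and 0 < κ ≤ 1, the
Schur multiplier m_κ(x) exists and equals Σ_{w∈F} κ^{ℓ(w)} f_w T_w^{(1)}, the commutator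
[D_S, m_κ(x)] exists and equals m_κ([D_S, x]), and ‖[D_S, m_κ(x)]‖ ≤ ‖[D_S, x]‖. -/
theorem schur_multiplier_of_Cc {B W : Type*} [Fintype B] [Group W] [DecidableEq W]
    {M : CoxeterMatrix B} (cs : CoxeterSystem M W)
    (T1 : W → Op W) (hT1 : ∀ w v : W, T1 w (delta v) = delta (w * v))
    (f : W → W → ℂ) (F : Finset W)
    (Mf : W → Op W) (hMf : ∀ w v : W, Mf w (delta v) = f w v • delta v)
    (κ : ℝ) (hκ0 : 0 < κ) (hκ1 : κ ≤ 1)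
    (C : Op W) (hC : IsCommutatorDS cs (∑ w ∈ F, Mf w * T1 w) C) :
    IsSchur cs κ (∑ w ∈ F, Mf w * T1 w)
      (∑ w ∈ F, ((κ : ℂ) ^ (cs.length w)) • (Mf w * T1 w)) ∧
    ∃ C' : Op W,
      IsCommutatorDS cs (∑ w ∈ F, ((κ : ℂ) ^ (cs.length w)) • (Mf w * T1 w)) C' ∧
      IsSchur cs κ C C' ∧ ‖C'‖ ≤ ‖C‖ := by
  -- A summand `f_w T_w` contributes to the `(u, v)` coefficient only if `w = u v⁻¹`.
  have hterm : ∀ w u v : W, (Mf w * T1 w) (delta v) u = if u = w * v then f w u else 0 := by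
    intro w u v
    change (Mf w (T1 w (delta v))) u = _
    rw [hT1, hMf, lp.coeFn_smul, Pi.smul_apply, delta_apply, smul_eq_mul]
    by_cases h : u = w * v
    · simp [h]
    · simp [h]
  have hsum : ∀ (g : W → Op W) (v u : W),
      (∑ w ∈ F, g w) (delta v) u = ∑ w ∈ F, g w (delta v) u := by
    intro g v u
    rw [sum_apply, lp.coeFn_sum, Finset.sum_apply]
  have hx : ∀ u v : W, (∑ w ∈ F, ((κ : ℂ) ^ (cs.length w)) • (Mf w * T1 w)) (delta v) u =
      (κ : ℂ) ^ (cs.length (u * v⁻¹)) * (∑ w ∈ F, Mf w * T1 w) (delta v) u := by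
    intro u v
    rw [hsum, hsum, Finset.mul_sum]
    refine Finset.sum_congr rfl fun w _ => ?_
    rw [smul_apply, lp.coeFn_smul, Pi.smul_apply, smul_eq_mul, hterm]
    by_cases h : u = w * v
    · simp [h]
    · simp [h]
  have hS : IsSchur cs κ (∑ w ∈ F, Mf w * T1 w)
      (∑ w ∈ F, ((κ : ℂ) ^ (cs.length w)) • (Mf w * T1 w)) := by
    intro u v
    rw [inner_delta, inner_delta, hx, map_mul, map_pow, Complex.conj_ofReal]
  have hC0 : ∀ u v : W, u * v⁻¹ ∉ F → C (delta v) u = 0 := by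
    intro u v huv
    have h0 : (∑ w ∈ F, Mf w * T1 w) (delta v) u = 0 := by
      rw [hsum]
      refine Finset.sum_eq_zero fun w hw => ?_
      rw [hterm, if_neg]
      rintro rfl
      exact huv (by simpa using hw)
    have h := hC v u
    rw [inner_delta, inner_delta, h0, map_zero, mul_zero] at h
    simpa using h
  have hδ : ∀ v : W, ‖(delta v : l2 W)‖ = 1 := by
    intro v
    rw [delta, lp.norm_single (by norm_num), norm_one]
  -- `D w` records the coefficients of `C` on the diagonal `u v⁻¹ = w`.
  have hdiag : ∀ w : W, ∃ D : Op W, ∀ (a : l2 W) (u : W),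
      D a u = C (delta (w⁻¹ * u)) u * a u := by
    intro w
    obtain ⟨D, hD, -⟩ := exists_diagonal (fun u => C (delta (w⁻¹ * u)) u) ‖C‖ (norm_nonneg _)
      (fun u => (lp.norm_apply_le_norm (by norm_num) _ u).trans
        ((C.le_opNorm _).trans (by rw [hδ, mul_one])))
    exact ⟨D, hD⟩
  choose D hD using hdiag
  have hC' : ∀ u v : W, (∑ w ∈ F, ((κ : ℂ) ^ (cs.length w)) • (D w * T1 w)) (delta v) u =
      (κ : ℂ) ^ (cs.length (u * v⁻¹)) * C (delta v) u := by
    intro u v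
    have ht : ∀ w, (((κ : ℂ) ^ (cs.length w)) • (D w * T1 w)) (delta v) u =
        if u * v⁻¹ = w then (κ : ℂ) ^ (cs.length (u * v⁻¹)) * C (delta v) u else 0 := by
      intro w
      rw [smul_apply, lp.coeFn_smul, Pi.smul_apply, smul_eq_mul]
      change _ * (D w (T1 w (delta v))) u = _
      rw [hT1, hD, delta_apply]
      by_cases h : u = w * v
      · simp [h]
      · have h' : ¬ u * v⁻¹ = w := fun e => h (by rw [← e]; simp)
        simp [h, h']
    rw [hsum, Finset.sum_congr rfl fun w _ => ht w, Finset.sum_ite_eq]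
    split_ifs with h
    · rfl
    · rw [hC0 u v h, mul_zero]
  have hS' : IsSchur cs κ C (∑ w ∈ F, ((κ : ℂ) ^ (cs.length w)) • (D w * T1 w)) := by
    intro u v
    rw [inner_delta, inner_delta, hC', map_mul, map_pow, Complex.conj_ofReal]
  refine ⟨hS, ∑ w ∈ F, ((κ : ℂ) ^ (cs.length w)) • (D w * T1 w), ?_, hS', ?_⟩
  · intro v u
    rw [hS' u v, hS u v, hC v u]
    ring
  · obtain ⟨N, hN⟩ := exists_inversion_sets cs
    refine norm_schur_le N κ hκ0 hκ1 C _ (fun v => F.image (· * v)) ?_ ?_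
    · intro u v hu
      refine hC0 u v fun h => hu (Finset.mem_image.2 ⟨_, h, by simp⟩)
    · intro u v
      rw [hC', hN]
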